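/- arXiv:math/0108117 — 2 statements merged into one kernel-verified Lean document; each statement's English description precedes it below -/
import Mathlib

section
/- Let μ : R ⊗[S] R → R be the multiplication map and π : R → R/S the quotient map onto R/S := R ⧸ (range of the algebra map S → R), taken as S-modules. Then the S-linear map θ : ker μ → R ⊗[S] (R/S) given by restricting Σ rᵢ ⊗ rᵢ' ↦ Σ rᵢ ⊗ π(rᵢ') to ker μ is bijective, and its inverse is the well-defined map determined by r ⊗ π(r') ↦ r ⊗ r' − r r' ⊗ 1 (which is independent of the choice of representative r' of π(r')). Both maps are also R-linear for the R-module structures given by multiplication in the left tensor factor. -/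
/-!
Tensoring `S → R → R/S → 0` with `R` gives an exact sequence `R → R ⊗[S] R → R ⊗[S] (R/S) → 0`
whose first map is `r ↦ r ⊗ 1`. Multiplication `μ` is a retraction of this first map, so the
sequence splits: `x ↦ x - μ x ⊗ 1` is a projection onto `ker μ`, and `R ⊗[S] (R/S)` is
identified with `ker μ`. On pure tensors the projection is `r ⊗ r' ↦ r ⊗ r' - r r' ⊗ 1`.
-/

open TensorProduct

variable {S R : Type*} [CommRing S] [CommRing R] [Algebra S R]

section Retraction

variable {T M N P : Type*} [Ring T] [AddCommGroup M] [AddCommGroup N] [AddCommGroup P]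
  [Module T M] [Module T N] [Module T P] {f : M →ₗ[T] N} {g : N →ₗ[T] P} {l : N →ₗ[T] M}

lemma sub_apply_mem_ker_of_leftInverse (hlf : Function.LeftInverse l f) (y : N) :
    y - f (l y) ∈ LinearMap.ker l := by
  rw [LinearMap.mem_ker, map_sub, hlf, sub_self]

lemma map_sub_apply_of_exact (hfg : Function.Exact f g) (y : N) (m : M) :
    g (y - f m) = g y := by
  rw [map_sub, hfg.apply_apply_eq_zero, sub_zero]

lemma sub_apply_eq_sub_apply_of_exact_of_leftInverse (hfg : Function.Exact f g)
    (hlf : Function.LeftInverse l f) {y y' : N} (h : g y = g y') :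
    y - f (l y) = y' - f (l y') := by
  obtain ⟨m, hm⟩ : y - y' ∈ Set.range f := (hfg _).mp (by rw [map_sub, h, sub_self])
  have hfix : f (l (y - y')) = y - y' := by rw [← hm, hlf]
  rw [map_sub, map_sub] at hfix
  rw [sub_eq_sub_iff_sub_eq_sub, hfix]

lemma bijective_domRestrict_ker_of_exact_of_leftInverse (hfg : Function.Exact f g)
    (hg : Function.Surjective g) (hlf : Function.LeftInverse l f) :
    Function.Bijective (g.domRestrict (LinearMap.ker l)) := by
  constructor
  · rintro ⟨y, hy⟩ ⟨y', hy'⟩ h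
    have hsub := sub_apply_eq_sub_apply_of_exact_of_leftInverse hfg hlf h
    rw [LinearMap.mem_ker] at hy hy'
    simpa [hy, hy'] using hsub
  · intro p
    obtain ⟨y, rfl⟩ := hg p
    exact ⟨⟨y - f (l y), sub_apply_mem_ker_of_leftInverse hlf y⟩, map_sub_apply_of_exact hfg y _⟩

end Retraction

section Algebra

variable {A : Type*} [Ring A] [Algebra S A]

lemma exact_mk_flip_one_lTensor_mkQ (M : Type*) [AddCommGroup M] [Module S M] :
    Function.Exact ((TensorProduct.mk S M A).flip 1)
      ((Submodule.mkQ (LinearMap.range (Algebra.linearMap S A))).lTensor M) := by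
  have hmk : (TensorProduct.mk S M A).flip 1 =
      (Algebra.linearMap S A).lTensor M ∘ₗ (TensorProduct.rid S M).symm.toLinearMap := by
    ext m
    simp
  rw [hmk, LinearEquiv.precomp_exact_iff_exact]
  exact lTensor_exact M (Algebra.linearMap S A).exact_map_mkQ_range (Submodule.mkQ_surjective _)

lemma leftInverse_mul'_mk_flip_one :
    Function.LeftInverse (LinearMap.mul' S A) ((TensorProduct.mk S A A).flip 1) :=
  mul_one

theorem ker_mul_equiv_tensor_quotient_general :
    Function.Bijective
      (fun x : LinearMap.ker (LinearMap.mul' S A) =>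
        ((Submodule.mkQ (LinearMap.range (Algebra.linearMap S A))).lTensor A)
          (x : A ⊗[S] A)) ∧
    (∀ r r' : A,
      (r ⊗ₜ[S] r' - (r * r') ⊗ₜ[S] (1 : A)) ∈ LinearMap.ker (LinearMap.mul' S A) ∧
      ((Submodule.mkQ (LinearMap.range (Algebra.linearMap S A))).lTensor A)
          (r ⊗ₜ[S] r' - (r * r') ⊗ₜ[S] (1 : A)) =
        r ⊗ₜ[S] (Submodule.mkQ (LinearMap.range (Algebra.linearMap S A)) r')) ∧
    (∀ r r' r'' : A,
      Submodule.mkQ (LinearMap.range (Algebra.linearMap S A)) r' =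
        Submodule.mkQ (LinearMap.range (Algebra.linearMap S A)) r'' →
      r ⊗ₜ[S] r' - (r * r') ⊗ₜ[S] (1 : A) = r ⊗ₜ[S] r'' - (r * r'') ⊗ₜ[S] (1 : A)) ∧
    (∀ (a : A) (x : A ⊗[S] A), x ∈ LinearMap.ker (LinearMap.mul' S A) →
      a • x ∈ LinearMap.ker (LinearMap.mul' S A) ∧
      ((Submodule.mkQ (LinearMap.range (Algebra.linearMap S A))).lTensor A) (a • x) =
        a • ((Submodule.mkQ (LinearMap.range (Algebra.linearMap S A))).lTensor A) x) := by
  have hexact := exact_mk_flip_one_lTensor_mkQ (S := S) (A := A) A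
  have hretract := leftInverse_mul'_mk_flip_one (S := S) (A := A)
  have hsurj := LinearMap.lTensor_surjective A
    (Submodule.mkQ_surjective (LinearMap.range (Algebra.linearMap S A)))
  refine ⟨bijective_domRestrict_ker_of_exact_of_leftInverse hexact hsurj hretract,
    fun r r' ↦ ⟨?_, ?_⟩, fun r r' r'' h ↦ ?_, fun a x hx ↦ ⟨?_, ?_⟩⟩
  · exact sub_apply_mem_ker_of_leftInverse hretract (r ⊗ₜ r')
  · exact map_sub_apply_of_exact hexact (r ⊗ₜ r') (r * r')
  · exact sub_apply_eq_sub_apply_of_exact_of_leftInverse hexact hretract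
      (congrArg (r ⊗ₜ[S] ·) h)
  · exact (LinearMap.ker (LinearMap.mul'' S A)).smul_mem a hx
  · exact ((LinearMap.range (Algebra.linearMap S A)).mkQ.baseChange A).map_smul a x

end Algebra

/-- Let `S` be a commutative ring and `R` a commutative `S`-algebra.
Let `μ : R ⊗[S] R → R` be the multiplication map and `π : R → R/S` the quotient map
onto `R/S = R ⧸ (range of S → R)`.  Then the `S`-linear map
`θ : ker μ → R ⊗[S] (R/S)` obtained by restricting `Σ rᵢ ⊗ rᵢ' ↦ Σ rᵢ ⊗ π(rᵢ')` to
`ker μ` is bijective, its inverse is determined by `r ⊗ π(r') ↦ r ⊗ r' − r r' ⊗ 1`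
(which is independent of the representative `r'`), and both maps are `R`-linear for the
`R`-module structures given by multiplication in the left tensor factor. -/
theorem ker_mul_equiv_tensor_quotient :
    -- `θ` is bijective
    Function.Bijective
      (fun x : LinearMap.ker (LinearMap.mul' S R) =>
        ((Submodule.mkQ (LinearMap.range (Algebra.linearMap S R))).lTensor R)
          (x : R ⊗[S] R)) ∧
    -- the formula for the inverse: `r ⊗ r' − r r' ⊗ 1` lies in `ker μ` and is mapped
    -- by `θ` to `r ⊗ π(r')`
    (∀ r r' : R,
      (r ⊗ₜ[S] r' - (r * r') ⊗ₜ[S] (1 : R)) ∈ LinearMap.ker (LinearMap.mul' S R) ∧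
      ((Submodule.mkQ (LinearMap.range (Algebra.linearMap S R))).lTensor R)
          (r ⊗ₜ[S] r' - (r * r') ⊗ₜ[S] (1 : R)) =
        r ⊗ₜ[S] (Submodule.mkQ (LinearMap.range (Algebra.linearMap S R)) r')) ∧
    -- independence of the choice of representative
    (∀ r r' r'' : R,
      Submodule.mkQ (LinearMap.range (Algebra.linearMap S R)) r' =
        Submodule.mkQ (LinearMap.range (Algebra.linearMap S R)) r'' →
      r ⊗ₜ[S] r' - (r * r') ⊗ₜ[S] (1 : R) = r ⊗ₜ[S] r'' - (r * r'') ⊗ₜ[S] (1 : R)) ∧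
    -- `R`-linearity of both maps for left-factor multiplication
    (∀ (a : R) (x : R ⊗[S] R), x ∈ LinearMap.ker (LinearMap.mul' S R) →
      a • x ∈ LinearMap.ker (LinearMap.mul' S R) ∧
      ((Submodule.mkQ (LinearMap.range (Algebra.linearMap S R))).lTensor R) (a • x) =
        a • ((Submodule.mkQ (LinearMap.range (Algebra.linearMap S R))).lTensor R) x) :=
  ker_mul_equiv_tensor_quotient_general
end

section
/- Let M be an R-module, ∇ : M → M ⊗[R] C any R-linear map, and set ρ := ∇ + (m ↦ m ⊗ g). Define the R-linear extension ∇¹ : M ⊗[R] C → M ⊗[R] C ⊗[R] C on elementary tensors by ∇¹(m ⊗ c) = ∇(m) ⊗ c + m ⊗ (g ⊗ c − Δ(c) + c ⊗ g). Then the curvature equals the coassociativity defect: ∇¹ ∘ ∇ = (ρ ⊗ id_C) ∘ ρ − (id_M ⊗ Δ) ∘ ρ. Consequently ρ is coassociative if and only if the connection ∇ is flat (∇¹ ∘ ∇ = 0). -/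
/-! Write `σ m = m ⊗ g` and `ρ = ∇ + σ`. The coassociativity defect is quadratic in the coaction, so
the defect of `ρ` is that of `∇`, plus two mixed terms, plus that of `σ`. Reassociated, the mixed
terms are `id ⊗ (g ⊗ ·)` and `id ⊗ (· ⊗ g)` applied after `∇`, which are the outer terms of `d¹`;
the defect of `σ` is `m ↦ m ⊗ (g ⊗ g - Δ g)`, which vanishes for grouplike `g`. -/

open TensorProduct

variable {R C M : Type*} [CommRing R] [AddCommGroup C] [Module R C] [Coalgebra R C]
  [AddCommGroup M] [Module R M]

/-- The linear map `m ↦ m ⊗ g`. -/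
noncomputable def tmulGrouplike (M : Type*) [AddCommGroup M] [Module R M]
    (g : C) : M →ₗ[R] M ⊗[R] C :=
  (TensorProduct.mk R M C).flip g

/-- The degree-one Amitsur differential `d¹ : C → C ⊗ C`, `c ↦ g ⊗ c − Δ(c) + c ⊗ g`. -/
noncomputable def amitsurD1 (g : C) : C →ₗ[R] C ⊗[R] C :=
  TensorProduct.mk R C C g - Coalgebra.comul (R := R) + (TensorProduct.mk R C C).flip g

/-- The extension `∇¹ : M ⊗ C → M ⊗ (C ⊗ C)` of a connection `∇` by the Leibniz rule:
`∇¹(m ⊗ c) = ∇(m) ⊗ c + m ⊗ (g ⊗ c − Δ(c) + c ⊗ g)`. -/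
noncomputable def connectionExt (g : C) (nabla : M →ₗ[R] M ⊗[R] C) :
    M ⊗[R] C →ₗ[R] M ⊗[R] (C ⊗[R] C) :=
  (TensorProduct.assoc R M C C).toLinearMap.comp (nabla.rTensor C) +
    (amitsurD1 (R := R) g).lTensor M

section Reassociation

variable {S N P Q : Type*} [CommSemiring S] [AddCommMonoid N] [Module S N]
  [AddCommMonoid P] [Module S P] [AddCommMonoid Q] [Module S Q]

theorem assoc_comp_rTensor_flip_mk (p : P) :
    (TensorProduct.assoc S N P Q).toLinearMap ∘ₗ ((TensorProduct.mk S N P).flip p).rTensor Q =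
      (TensorProduct.mk S P Q p).lTensor N := by
  ext n q
  rfl

theorem assoc_comp_flip_mk (q : Q) :
    (TensorProduct.assoc S N P Q).toLinearMap ∘ₗ (TensorProduct.mk S (N ⊗[S] P) Q).flip q =
      ((TensorProduct.mk S P Q).flip q).lTensor N := by
  ext n p
  rfl

end Reassociation

section Defect

variable {S D N : Type*} [CommRing S] [AddCommGroup D] [Module S D] [AddCommGroup N] [Module S N]

/-- The failure `(ρ ⊗ id) ∘ ρ - (id ⊗ Δ) ∘ ρ` of a linear map `ρ : N → N ⊗ D` to be a coassociative
coaction, reassociated into `N ⊗ (D ⊗ D)`. The comultiplication `Δ` is any linear map. -/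
noncomputable def coassocDefect (Δ : D →ₗ[S] D ⊗[S] D) (ρ : N →ₗ[S] N ⊗[S] D) :
    N →ₗ[S] N ⊗[S] (D ⊗[S] D) :=
  (TensorProduct.assoc S N D D).toLinearMap ∘ₗ ρ.rTensor D ∘ₗ ρ - Δ.lTensor N ∘ₗ ρ

/-- The curvature `∇¹ ∘ ∇` of a connection `∇ : N → N ⊗ D`, where `∇¹` extends `∇` by the Leibniz
rule along `d ↦ g ⊗ d - Δ d + d ⊗ g`. The comultiplication `Δ` is any linear map; for that of a
coalgebra this is `(connectionExt g ∇).comp ∇`. -/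
noncomputable def connectionCurvature (Δ : D →ₗ[S] D ⊗[S] D) (g : D) (nabla : N →ₗ[S] N ⊗[S] D) :
    N →ₗ[S] N ⊗[S] (D ⊗[S] D) :=
  ((TensorProduct.assoc S N D D).toLinearMap ∘ₗ nabla.rTensor D +
    (TensorProduct.mk S D D g - Δ + (TensorProduct.mk S D D).flip g).lTensor N) ∘ₗ nabla

theorem coassocDefect_add (Δ : D →ₗ[S] D ⊗[S] D) (ρ σ : N →ₗ[S] N ⊗[S] D) :
    coassocDefect Δ (ρ + σ) = coassocDefect Δ ρ +
      (TensorProduct.assoc S N D D).toLinearMap ∘ₗ (σ.rTensor D ∘ₗ ρ + ρ.rTensor D ∘ₗ σ) +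
      coassocDefect Δ σ := by
  simp only [coassocDefect, LinearMap.rTensor_add, LinearMap.add_comp, LinearMap.comp_add]
  abel

theorem coassocDefect_flip_mk (Δ : D →ₗ[S] D ⊗[S] D) (g : D) :
    coassocDefect Δ ((TensorProduct.mk S N D).flip g) =
      (TensorProduct.mk S N (D ⊗[S] D)).flip (g ⊗ₜ[S] g - Δ g) := by
  ext n
  simp [coassocDefect]

theorem connectionCurvature_eq_coassocDefect_add_mixed (Δ : D →ₗ[S] D ⊗[S] D) (g : D)
    (nabla : N →ₗ[S] N ⊗[S] D) :
    connectionCurvature Δ g nabla = coassocDefect Δ nabla +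
      (TensorProduct.assoc S N D D).toLinearMap ∘ₗ
        (((TensorProduct.mk S N D).flip g).rTensor D ∘ₗ nabla +
          nabla.rTensor D ∘ₗ (TensorProduct.mk S N D).flip g) := by
  rw [LinearMap.rTensor_comp_flip_mk, LinearMap.comp_add, ← LinearMap.comp_assoc,
    ← LinearMap.comp_assoc, assoc_comp_rTensor_flip_mk, assoc_comp_flip_mk]
  simp only [connectionCurvature, coassocDefect, LinearMap.lTensor_add, LinearMap.lTensor_sub,
    LinearMap.add_comp, LinearMap.sub_comp, LinearMap.comp_assoc]
  abel

theorem connectionCurvature_eq_coassocDefect_sub (Δ : D →ₗ[S] D ⊗[S] D) (g : D)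
    (nabla : N →ₗ[S] N ⊗[S] D) :
    connectionCurvature Δ g nabla =
      coassocDefect Δ (nabla + (TensorProduct.mk S N D).flip g) -
        coassocDefect Δ ((TensorProduct.mk S N D).flip g) := by
  rw [coassocDefect_add, add_sub_cancel_right, connectionCurvature_eq_coassocDefect_add_mixed]

theorem curvature_eq_coassociativity_defect_general (Δ : D →ₗ[S] D ⊗[S] D) (g : D)
    (hg : Δ g = g ⊗ₜ[S] g) (nabla : N →ₗ[S] N ⊗[S] D) :
    connectionCurvature Δ g nabla =
        coassocDefect Δ (nabla + (TensorProduct.mk S N D).flip g) ∧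
      ((TensorProduct.assoc S N D D).toLinearMap ∘ₗ
            (nabla + (TensorProduct.mk S N D).flip g).rTensor D ∘ₗ
              (nabla + (TensorProduct.mk S N D).flip g) =
          Δ.lTensor N ∘ₗ (nabla + (TensorProduct.mk S N D).flip g) ↔
        connectionCurvature Δ g nabla = 0) := by
  have curvature_eq : connectionCurvature Δ g nabla =
      coassocDefect Δ (nabla + (TensorProduct.mk S N D).flip g) := by
    rw [connectionCurvature_eq_coassocDefect_sub, coassocDefect_flip_mk, hg, sub_self, map_zero,
      sub_zero]
  exact ⟨curvature_eq, by rw [curvature_eq, coassocDefect, sub_eq_zero]⟩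

end Defect

/-- Let `R` be a commutative ring, `C` a coassociative counital
`R`-coalgebra, `g ∈ C` grouplike (`Δ g = g ⊗ g`, `ε g = 1`), `M` an `R`-module,
`∇ : M → M ⊗ C` any `R`-linear map and `ρ := ∇ + (m ↦ m ⊗ g)`.  With
`∇¹(m ⊗ c) = ∇(m) ⊗ c + m ⊗ (g ⊗ c − Δ(c) + c ⊗ g)`, the curvature equals the
coassociativity defect: `∇¹ ∘ ∇ = (ρ ⊗ id) ∘ ρ − (id ⊗ Δ) ∘ ρ` (after the canonical
associativity identification).  Consequently `ρ` is coassociative iff `∇` is flat. -/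
theorem curvature_eq_coassociativity_defect
    (g : C) (hg₁ : Coalgebra.comul (R := R) g = g ⊗ₜ[R] g)
    (hg₂ : Coalgebra.counit (R := R) g = (1 : R))
    (nabla : M →ₗ[R] M ⊗[R] C) :
    ((connectionExt g nabla).comp nabla =
      ((TensorProduct.assoc R M C C).toLinearMap.comp
          (((nabla + tmulGrouplike M g).rTensor C).comp (nabla + tmulGrouplike M g))) -
        ((Coalgebra.comul (R := R)).lTensor M).comp (nabla + tmulGrouplike M g)) ∧
    (((TensorProduct.assoc R M C C).toLinearMap.comp
          (((nabla + tmulGrouplike M g).rTensor C).comp (nabla + tmulGrouplike M g)) =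
        ((Coalgebra.comul (R := R)).lTensor M).comp (nabla + tmulGrouplike M g)) ↔
      (connectionExt g nabla).comp nabla = 0) :=
  curvature_eq_coassociativity_defect_general Coalgebra.comul g hg₁ nabla
end
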